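/- arXiv:2204.07033 — 5 statements merged into one kernel-verified Lean document; each statement's English description precedes it below -/
import Mathlib

section
/- The set T = {(x, sin(1/x)) : 0 < x ≤ 1} ∪ {(0, y) : -1 ≤ y < 0}, viewed as a topological subspace of ℝ², is a locally compact topological space (every point of T has a compact neighborhood in T). -/
open Real Set

/-- The deleted topologist's sine curve `T`. -/
def T : Set (ℝ × ℝ) :=
  {p : ℝ × ℝ | (0 < p.1 ∧ p.1 ≤ 1 ∧ p.2 = Real.sin (1 / p.1)) ∨
    (p.1 = 0 ∧ -1 ≤ p.2 ∧ p.2 < 0)}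

/-! A locally closed subspace of the plane is locally compact. The graph of `x ↦ sin (1 / x)` over
the open half-line `x > 0` together with the half-plane `x ≤ 0` is closed, since its complement
consists of the points `(x, y)` with `x > 0` and `y ≠ sin (1 / x)`. Intersecting it with the open
set where `x > 0` or `y < 0` leaves the graph and the open lower part of the half-plane `x ≤ 0`,
and `T` is the part of this locally closed set lying in the closed strip `[0, 1] × [-1, ∞)`. -/

section GraphOverOpen

variable {X Y : Type*} {f : X → Y} {U : Set X} {V : Set Y}

theorem graphOn_union_compl_prod_eq_inter :
    U.graphOn f ∪ Uᶜ ×ˢ V = (U ×ˢ univ ∪ univ ×ˢ V) ∩ (U.graphOn f ∪ Uᶜ ×ˢ univ) := by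
  ext ⟨x, y⟩
  simp only [mem_union, mem_inter_iff, mem_prod, mem_graphOn, mem_compl_iff, mem_univ]
  tauto

variable [TopologicalSpace X] [TopologicalSpace Y] [T2Space Y]

theorem isClosed_graphOn_union_compl_prod_univ (hU : IsOpen U)
    (hf : ContinuousOn f U) : IsClosed (U.graphOn f ∪ Uᶜ ×ˢ (univ : Set Y)) := by
  have hpair : ContinuousOn (fun p : X × Y ↦ (f p.1, p.2)) (U ×ˢ univ) :=
    (hf.comp continuousOn_fst fun _ hp ↦ hp.1).prodMk continuousOn_snd
  have hopen : IsOpen (U ×ˢ univ ∩ (fun p : X × Y ↦ (f p.1, p.2)) ⁻¹' (diagonal Y)ᶜ) :=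
    hpair.isOpen_inter_preimage (hU.prod isOpen_univ) isClosed_diagonal.isOpen_compl
  rw [← isOpen_compl_iff]
  convert hopen using 1
  ext ⟨x, y⟩
  simp only [mem_compl_iff, mem_union, mem_graphOn, mem_prod, mem_inter_iff, mem_preimage,
    mem_diagonal_iff, mem_univ]
  tauto

theorem isLocallyClosed_graphOn_union_compl_prod (hU : IsOpen U) (hV : IsOpen V)
    (hf : ContinuousOn f U) : IsLocallyClosed (U.graphOn f ∪ Uᶜ ×ˢ V) :=
  ⟨U ×ˢ univ ∪ univ ×ˢ V, U.graphOn f ∪ Uᶜ ×ˢ univ,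
    (hU.prod isOpen_univ).union (isOpen_univ.prod hV),
    isClosed_graphOn_union_compl_prod_univ hU hf, graphOn_union_compl_prod_eq_inter⟩

end GraphOverOpen

theorem continuousOn_sin_one_div : ContinuousOn (fun x : ℝ ↦ sin (1 / x)) (Ioi 0) :=
  continuous_sin.comp_continuousOn <| continuousOn_const.div continuousOn_id fun _ hx ↦ hx.ne'

theorem T_eq_inter_Icc_prod_Ici :
    T = ((Ioi 0).graphOn (fun x ↦ sin (1 / x)) ∪ (Ioi 0)ᶜ ×ˢ Iio 0) ∩ Icc 0 1 ×ˢ Ici (-1) := by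
  ext ⟨x, y⟩
  simp only [T, mem_ofPred_eq, mem_inter_iff, mem_union, mem_graphOn, mem_prod, mem_compl_iff,
    mem_Ioi, mem_Iio, mem_Icc, mem_Ici, not_lt]
  constructor
  · rintro (⟨hx, hx1, rfl⟩ | ⟨rfl, hy, hy0⟩)
    · exact ⟨.inl ⟨hx, rfl⟩, ⟨hx.le, hx1⟩, neg_one_le_sin _⟩
    · exact ⟨.inr ⟨le_rfl, hy0⟩, ⟨le_rfl, zero_le_one⟩, hy⟩
  · rintro ⟨⟨hx, hxy⟩ | ⟨hx, hy0⟩, ⟨hx0, hx1⟩, hy⟩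
    · exact .inl ⟨hx, hx1, hxy.symm⟩
    · exact .inr ⟨hx.antisymm hx0, hy, hy0⟩

theorem isLocallyClosed_T : IsLocallyClosed T := by
  rw [T_eq_inter_Icc_prod_Ici]
  exact (isLocallyClosed_graphOn_union_compl_prod isOpen_Ioi isOpen_Iio
    continuousOn_sin_one_div).inter (isClosed_Icc.prod isClosed_Ici).isLocallyClosed

/-- `T`, with the subspace topology from `ℝ²`, is locally compact:
every point of `T` has a compact neighborhood in `T`. -/
theorem stmt_1 : ∀ x : T, ∃ K : Set T, IsCompact K ∧ K ∈ nhds x := by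
  have : LocallyCompactSpace T := isLocallyClosed_T.locallyCompactSpace
  exact exists_compact_mem_nhds
end

section
/- The points r = (0, -1) and s = (1, sin 1) of T lie in different path components of T; that is, there is no continuous path γ : [0,1] → T with γ(0) = r and γ(1) = s. -/
open Real Set

def r : ℝ × ℝ := (0, -1)

noncomputable def s : ℝ × ℝ := (1, Real.sin 1)

/-!
Along a path in `T`, the set of times at which the first coordinate vanishes is closed. It is also
open: at such a time the second coordinate is negative, hence it differs from `1` nearby, where the
first coordinate must avoid every `c > 0` with `sin (1 / c) = 1`. These values accumulate at `0`,
so by the intermediate value theorem the first coordinate remains `0`. Since the path starts with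
first coordinate `0`, it can never leave the `y`-axis.
-/

open Filter Topology

theorem eventually_le_of_frequently_notMem_image {X α : Type*} [TopologicalSpace X]
    [LocallyConnectedSpace X] [LinearOrder α] [TopologicalSpace α] [OrderClosedTopology α]
    {g : X → α} {U : Set X} {t : X} (hU : U ∈ 𝓝 t) (hg : ContinuousOn g U)
    (h : ∃ᶠ c in 𝓝[>] (g t), c ∉ g '' U) : ∀ᶠ u in 𝓝 t, g u ≤ g t := by
  obtain ⟨V, ⟨hV, htV, hVconn⟩, hVU⟩ :=
    (LocallyConnectedSpace.open_connected_basis t).mem_iff.1 hU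
  filter_upwards [hV.mem_nhds htV] with u huV
  by_contra! hlt
  obtain ⟨c, hc, htc, hcu⟩ := (h.and_eventually (Ioo_mem_nhdsGT hlt)).exists
  have hcV : c ∈ g '' V :=
    hVconn.isPreconnected.intermediate_value htV huV (hg.mono hVU) ⟨htc.le, hcu.le⟩
  exact hc (image_mono hVU hcV)

theorem frequently_atTop_eq_of_periodic {α β : Type*} [AddCommGroup α] [LinearOrder α]
    [IsOrderedAddMonoid α] [Archimedean α] {f : α → β} {c : α} (hf : Function.Periodic f c)
    (hc : 0 < c) (a : α) : ∃ᶠ x in atTop, f x = f a := by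
  refine frequently_atTop.2 fun b => ?_
  obtain ⟨x, hx, hfx⟩ := hf.exists_mem_Ico hc a b
  exact ⟨x, hx.1, hfx.symm⟩

theorem frequently_nhdsGT_zero_sin_one_div_eq {y : ℝ} (hy : y ∈ Icc (-1) 1) :
    ∃ᶠ x in 𝓝[>] (0 : ℝ), sin (1 / x) = y := by
  obtain ⟨θ, rfl⟩ : y ∈ range sin := range_sin ▸ hy
  refine tendsto_inv_atTop_nhdsGT_zero.frequently ?_
  simpa only [one_div, inv_inv] using
    frequently_atTop_eq_of_periodic sin_periodic two_pi_pos θ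

theorem fst_nonneg_of_mem_T {p : ℝ × ℝ} (hp : p ∈ T) : 0 ≤ p.1 :=
  hp.elim (fun h => h.1.le) fun h => h.1.ge

theorem snd_neg_of_mem_T {p : ℝ × ℝ} (hp : p ∈ T) (h0 : p.1 = 0) : p.2 < 0 :=
  hp.elim (fun h => absurd h0 h.1.ne') fun h => h.2.2

theorem snd_eq_sin_of_mem_T {p : ℝ × ℝ} (hp : p ∈ T) (hpos : 0 < p.1) :
    p.2 = sin (1 / p.1) :=
  hp.elim (fun h => h.2.2) fun h => absurd h.1 hpos.ne'

theorem frequently_notMem_fst_image_of_mapsTo_T {X : Type*} {f : X → ℝ × ℝ} {U : Set X} {y : ℝ}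
    (hT : MapsTo f U T) (hy : y ∈ Icc (-1) 1) (hU : ∀ u ∈ U, (f u).2 ≠ y) :
    ∃ᶠ c in 𝓝[>] (0 : ℝ), c ∉ (fun u => (f u).1) '' U := by
  refine ((frequently_nhdsGT_zero_sin_one_div_eq hy).and_eventually self_mem_nhdsWithin).mono ?_
  rintro _ ⟨hsin, hpos⟩ ⟨u, huU, rfl⟩
  exact hU u huU ((snd_eq_sin_of_mem_T (hT huU) hpos).trans hsin)

theorem isClopen_setOf_fst_eq_zero_of_forall_mem_T {X : Type*} [TopologicalSpace X]
    [LocallyConnectedSpace X] {f : X → ℝ × ℝ} (hf : Continuous f) (hT : ∀ t, f t ∈ T) :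
    IsClopen {t | (f t).1 = 0} := by
  refine ⟨isClosed_eq hf.fst continuous_const, isOpen_iff_mem_nhds.2 fun t (ht : (f t).1 = 0) => ?_⟩
  have hsnd : (f t).2 ≠ 1 := ((snd_neg_of_mem_T (hT t) ht).trans one_pos).ne
  have hU : {u | (f u).2 ≠ 1} ∈ 𝓝 t := (isOpen_ne_fun hf.snd continuous_const).mem_nhds hsnd
  have hgap : ∃ᶠ c in 𝓝[>] (f t).1, c ∉ (fun u => (f u).1) '' {u | (f u).2 ≠ 1} := by
    rw [ht]
    exact frequently_notMem_fst_image_of_mapsTo_T (fun u _ => hT u) (by norm_num) fun _ hu => hu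
  filter_upwards [eventually_le_of_frequently_notMem_image hU hf.fst.continuousOn hgap] with u hu
  exact le_antisymm (hu.trans_eq ht) (fst_nonneg_of_mem_T (hT u))

/-- The points `r = (0,-1)` and `s = (1, sin 1)` lie in different path components of `T`:
there is no continuous path in `T` from `r` to `s`. -/
theorem stmt_3 : ¬ JoinedIn T r s := by
  rintro ⟨γ, hγ⟩
  have hclopen : IsClopen {t | (γ.extend t).1 = 0} :=
    isClopen_setOf_fst_eq_zero_of_forall_mem_T γ.continuous_extend fun _ => hγ _
  have hstart : (γ.extend 0).1 = 0 := congrArg Prod.fst γ.extend_zero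
  have huniv : {t | (γ.extend t).1 = 0} = univ := hclopen.eq_univ ⟨0, hstart⟩
  have hend : s.1 = 0 := γ.extend_one ▸ eq_univ_iff_forall.1 huniv 1
  exact one_ne_zero hend
end

section
/- For every integer i ≥ 1, the connected component of the point r = (0,-1) in the space V_i is not an open subset of V_i (so V_i is not locally connected). -/
open Real Set

def V : Set (ℝ × ℝ) := T ∩ {p : ℝ × ℝ | p.2 < 0}

def Vi (i : ℕ) : Set (ℝ × ℝ) := V ∪ (T ∩ {p : ℝ × ℝ | p.1 > 1 / (i : ℝ)})

lemma r_mem_T : r ∈ T := Or.inr ⟨rfl, le_refl _, by norm_num [r]⟩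

lemma r_mem_Vi (i : ℕ) : r ∈ Vi i := Or.inl ⟨r_mem_T, by norm_num [r]⟩

lemma s_mem_T : s ∈ T := Or.inl ⟨one_pos, le_refl _, by norm_num [s]⟩

lemma s_mem_Vi {i : ℕ} (hi : 2 ≤ i) : s ∈ Vi i := by
  refine Or.inr ⟨s_mem_T, ?_⟩
  have h2 : (1 : ℝ) < i := by exact_mod_cast lt_of_lt_of_le one_lt_two (by exact_mod_cast hi)
  show (1 : ℝ) / (i : ℝ) < s.1
  rw [show s.1 = 1 from rfl, div_lt_one (by linarith)]
  exact h2

lemma Vi_mono {i j : ℕ} (hi : 1 ≤ i) (hij : i ≤ j) : Vi i ⊆ Vi j := by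
  apply Set.union_subset_union_right
  apply Set.inter_subset_inter_right
  intro p hp
  have hi' : (0 : ℝ) < i := by exact_mod_cast hi
  have hij' : (i : ℝ) ≤ j := by exact_mod_cast hij
  exact lt_of_le_of_lt (one_div_le_one_div_of_le hi' hij') hp

/-!
The first coordinate is continuous, so it maps the component `C` of `r` onto an interval containing
`0`. As `sin (1 / x) = -1` for arbitrarily small `x > 0`, the points `(x, -1)` of `V` accumulate
at `r`; if `C` were open it would contain one of them, and its projection would contain `[0, x]`.
But the abscissae `x ≤ 1 / i` with `sin (1 / x) = 1`, which also accumulate at `0`, are missed by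
`Vi i`.
-/

open Filter Topology

lemma not_isOpen_connectedComponent_of_frequently_notMem_range {X α : Type*} [TopologicalSpace X]
    [LinearOrder α] [TopologicalSpace α] [OrderClosedTopology α] {f : X → α} {a : X}
    (hf : Continuous f) (hclosure : a ∈ closure {x | f a < f x})
    (hgaps : ∃ᶠ c in 𝓝[>] f a, c ∉ range f) : ¬ IsOpen (connectedComponent a) := by
  intro hopen
  obtain ⟨b, hb, hab⟩ := mem_closure_iff.1 hclosure _ hopen mem_connectedComponent
  obtain ⟨c, hc, hac, hcb⟩ := (hgaps.and_eventually (Ioo_mem_nhdsGT hab)).exists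
  have hinterval : OrdConnected (f '' connectedComponent a) :=
    (isPreconnected_connectedComponent.image f hf.continuousOn).ordConnected
  exact hc <| image_subset_range f _ <|
    hinterval.out (mem_image_of_mem f mem_connectedComponent) (mem_image_of_mem f hb)
      ⟨hac.le, hcb.le⟩

lemma tendsto_one_div_add_nat_mul_two_pi (θ : ℝ) :
    Tendsto (fun n : ℕ ↦ 1 / (θ + n * (2 * π))) atTop (𝓝[>] 0) := by
  have hatTop : Tendsto (fun n : ℕ ↦ θ + n * (2 * π)) atTop atTop :=
    tendsto_atTop_add_const_left _ _ (tendsto_natCast_atTop_atTop.atTop_mul_const two_pi_pos)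
  simpa only [one_div, Function.comp_def] using tendsto_inv_atTop_nhdsGT_zero.comp hatTop

lemma frequently_sin_one_div_eq_sin (θ : ℝ) :
    ∃ᶠ x in 𝓝[>] (0 : ℝ), sin (1 / x) = sin θ :=
  (tendsto_one_div_add_nat_mul_two_pi θ).frequently <| Frequently.of_forall fun n ↦ by
    rw [one_div_one_div, sin_add_nat_mul_two_pi]

lemma mk_neg_one_mem_V {x : ℝ} (hx : x ∈ Ioc (0 : ℝ) 1) (hsin : sin (1 / x) = -1) : (x, -1) ∈ V :=
  ⟨Or.inl ⟨hx.1, hx.2, hsin.symm⟩, neg_one_lt_zero (R := ℝ)⟩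

lemma r_mem_closure_V_inter_fst_pos : r ∈ closure (V ∩ {p | 0 < p.1}) := by
  have hlim : Tendsto (fun x : ℝ ↦ (x, (-1 : ℝ))) (𝓝[>] 0) (𝓝 r) :=
    (tendsto_id.mono_left nhdsWithin_le_nhds).prodMk_nhds tendsto_const_nhds
  have hsin : ∃ᶠ x in 𝓝[>] (0 : ℝ), sin (1 / x) = -1 := by
    simpa only [sin_neg, sin_pi_div_two] using frequently_sin_one_div_eq_sin (-(π / 2))
  refine mem_closure_iff_frequently.2 <| hlim.frequently ?_
  exact (hsin.and_eventually (Ioc_mem_nhdsGT one_pos)).mono fun x ⟨hx, hx01⟩ ↦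
    ⟨mk_neg_one_mem_V hx01 hx, hx01.1⟩

lemma notMem_fst_image_Vi {i : ℕ} {x : ℝ} (hx : x ∈ Ioc 0 (1 / (i : ℝ)))
    (hsin : 0 ≤ sin (1 / x)) : x ∉ Prod.fst '' Vi i := by
  rintro ⟨⟨_, y⟩, ⟨⟨-, -, hy⟩ | ⟨hx0, -⟩, hneg⟩ | ⟨-, hgt⟩, rfl⟩
  · exact (hneg.trans_le hsin).ne hy
  · exact hx.1.ne' hx0
  · exact hx.2.not_gt hgt

lemma frequently_notMem_fst_image_Vi {i : ℕ} (hi : i ≠ 0) :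
    ∃ᶠ x in 𝓝[>] (0 : ℝ), x ∉ Prod.fst '' Vi i := by
  have hpos : (0 : ℝ) < 1 / i := Nat.one_div_cast_pos hi
  refine ((frequently_sin_one_div_eq_sin (π / 2)).and_eventually (Ioc_mem_nhdsGT hpos)).mono ?_
  rintro x ⟨hsin, hx⟩
  exact notMem_fst_image_Vi hx (by simp only [hsin, sin_pi_div_two, zero_le_one])

/-- For every `i ≥ 1`, the connected component of `r = (0,-1)` in `Vi i`
is not open in `Vi i`. -/
theorem stmt_6 : ∀ i : ℕ, 1 ≤ i →
    ¬ IsOpen (connectedComponent (⟨r, r_mem_Vi i⟩ : Vi i)) := by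
  intro i hi
  have hcont : Continuous fun p : Vi i ↦ p.1.1 := continuous_fst.comp continuous_subtype_val
  refine not_isOpen_connectedComponent_of_frequently_notMem_range hcont ?_ ?_
  · refine closure_subtype.2 <| closure_mono ?_ r_mem_closure_V_inter_fst_pos
    rintro p ⟨hpV, hpos⟩
    exact ⟨⟨p, Or.inl hpV⟩, hpos, rfl⟩
  · simpa only [image_eq_range, r] using
      frequently_notMem_fst_image_Vi (Nat.one_le_iff_ne_zero.1 hi)
end

section
/- For every integer i ≥ 1, every type G, and every locally constant function f : V_i → G, there exists ε > 0 such that f(z) = f(r) for every point z ∈ V_i whose first coordinate is less than ε. -/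
open Real Set

/-!
In the coordinate `t = 1 / x`, the part of `V` off the `y`-axis is the graph of `sin` over the
intervals `(2kπ - π, 2kπ)` with `k > 0`. So `V` consists of the segment below the origin, which
contains `r`, and of one arch of the curve for each `k > 0`. All these pieces are connected, and the
lowest points of the arches converge to `r`. A locally constant `f` therefore takes the value `f r`
on the segment and at the lowest point of all but finitely many arches, hence on all of these
arches. The finitely many exceptional arches stay away from the `y`-axis.
-/

open Filter Topology

lemma apply_eq_of_isPreconnected_of_subset {X Y : Type*} [TopologicalSpace X] {S C : Set X}
    {f : S → Y} (hf : IsLocallyConstant f) (hC : IsPreconnected C) (hCS : C ⊆ S) {x y : X}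
    (hx : x ∈ C) (hy : y ∈ C) : f ⟨x, hCS hx⟩ = f ⟨y, hCS hy⟩ := by
  have hC' : IsPreconnected ((↑) ⁻¹' C : Set S) := by
    rwa [← IsInducing.subtypeVal.isPreconnected_image, Subtype.image_preimage_coe,
      inter_eq_right.2 hCS]
  exact hf.apply_eq_of_isPreconnected hC' hx hy

lemma sin_neg_iff_exists_int_mem_Ioo {t : ℝ} :
    sin t < 0 ↔ ∃ k : ℤ, t ∈ Ioo (k * (2 * π) - π) (k * (2 * π)) := by
  constructor
  · intro ht
    obtain ⟨k, ⟨hk, hk'⟩, -⟩ := existsUnique_sub_zsmul_mem_Ioc two_pi_pos t (-π)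
    rw [zsmul_eq_mul] at hk hk'
    refine ⟨k, by linarith, lt_of_not_ge fun hge => ht.not_ge ?_⟩
    rw [← sin_sub_int_mul_two_pi t k]
    exact sin_nonneg_of_nonneg_of_le_pi (by linarith) (by linarith)
  · rintro ⟨k, hk, hk'⟩
    rw [← sin_sub_int_mul_two_pi t k]
    exact sin_neg_of_neg_of_neg_pi_lt (by linarith) (by linarith)

/-- The part of `T` on the `y`-axis. -/
def axisSegment : Set (ℝ × ℝ) := {0} ×ˢ Ico (-1) 0

/-- The curve `y = sin (1 / x)`, parametrized by `t = 1 / x`. -/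
noncomputable def sineCurve (t : ℝ) : ℝ × ℝ := (1 / t, sin t)

/-- The arch of the sine curve over the `k`-th interval of parameters on which `sin` is negative.
It lies in `T` for `k > 0`. -/
def arch (k : ℤ) : Set (ℝ × ℝ) := sineCurve '' Ioo (k * (2 * π) - π) (k * (2 * π))

/-- The lowest point of `arch k`. -/
noncomputable def trough (k : ℤ) : ℝ × ℝ := (1 / (k * (2 * π) - π / 2), -1)

lemma r_mem_axisSegment : r ∈ axisSegment := ⟨rfl, le_rfl, neg_one_lt_zero⟩

lemma isPreconnected_axisSegment : IsPreconnected axisSegment :=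
  isPreconnected_singleton.prod isPreconnected_Ico

lemma axisSegment_subset_V : axisSegment ⊆ V := fun _ ⟨hx, hy, hy'⟩ => ⟨.inr ⟨hx, hy, hy'⟩, hy'⟩

lemma r_mem_V : r ∈ V := axisSegment_subset_V r_mem_axisSegment

lemma trough_mem_arch (k : ℤ) : trough k ∈ arch k := by
  refine ⟨k * (2 * π) - π / 2, ⟨by linarith [pi_pos], by linarith [pi_pos]⟩, ?_⟩
  rw [sineCurve, trough, sub_eq_neg_add, sin_add_int_mul_two_pi, sin_neg, sin_pi_div_two]

lemma tendsto_trough : Tendsto trough atTop (𝓝 r) := by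
  have h : Tendsto (fun k : ℤ => (k : ℝ) * (2 * π) - π / 2) atTop atTop :=
    tendsto_atTop_add_const_right _ _ (tendsto_intCast_atTop_atTop.atTop_mul_const two_pi_pos)
  exact (h.const_div_atTop 1).prodMk_nhds tendsto_const_nhds

lemma one_lt_of_mem_Ioo_int_mul_two_pi {k : ℤ} (hk : 0 < k) {t : ℝ}
    (ht : t ∈ Ioo (k * (2 * π) - π) (k * (2 * π))) : 1 < t := by
  have hk' : (1 : ℝ) ≤ k := by exact_mod_cast hk
  nlinarith [ht.1, pi_gt_three]

lemma isPreconnected_arch {k : ℤ} (hk : 0 < k) : IsPreconnected (arch k) := by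
  refine isPreconnected_Ioo.image _ (ContinuousOn.prodMk ?_ continuous_sin.continuousOn)
  exact continuousOn_const.div₀ continuousOn_id fun t ht =>
    (one_pos.trans (one_lt_of_mem_Ioo_int_mul_two_pi hk ht)).ne'

lemma arch_subset_V {k : ℤ} (hk : 0 < k) : arch k ⊆ V := by
  rintro _ ⟨t, ht, rfl⟩
  have ht1 : 1 < t := one_lt_of_mem_Ioo_int_mul_two_pi hk ht
  have ht0 : 0 < t := one_pos.trans ht1
  refine ⟨.inl ⟨one_div_pos.2 ht0, (div_le_one ht0).2 ht1.le, ?_⟩,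
    sin_neg_iff_exists_int_mem_Ioo.2 ⟨k, ht⟩⟩
  simp only [sineCurve, one_div_one_div]

lemma one_div_lt_fst_of_mem_arch {k : ℤ} (hk : 0 < k) {z : ℝ × ℝ} (hz : z ∈ arch k) :
    1 / (k * (2 * π)) < z.1 := by
  obtain ⟨t, ht, rfl⟩ := hz
  exact one_div_lt_one_div_of_lt (one_pos.trans (one_lt_of_mem_Ioo_int_mul_two_pi hk ht)) ht.2

lemma V_eq_axisSegment_union_iUnion_arch : V = axisSegment ∪ ⋃ k > 0, arch k := by
  refine Subset.antisymm ?_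
    (union_subset axisSegment_subset_V (iUnion₂_subset fun _ => arch_subset_V))
  rintro ⟨x, y⟩ ⟨⟨hx, -, rfl : y = sin (1 / x)⟩ | ⟨hx, hy⟩, hneg⟩
  · obtain ⟨k, hk⟩ := sin_neg_iff_exists_int_mem_Ioo.1 hneg
    have hk0 : (0 : ℝ) < k :=
      pos_of_mul_pos_left ((one_div_pos.2 hx).trans hk.2) two_pi_pos.le
    have hxk : (x, sin (1 / x)) ∈ arch k := ⟨1 / x, hk, Prod.ext (one_div_one_div x) rfl⟩
    exact .inr (mem_iUnion₂.2 ⟨k, by exact_mod_cast hk0, hxk⟩)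
  · exact .inl ⟨hx, hy⟩

lemma exists_pos_forall_exists_isPreconnected_inter_nonempty {U : Set (ℝ × ℝ)}
    (hU : U ∈ 𝓝 r) : ∃ ε > (0 : ℝ), ∀ z ∈ V, z.1 < ε →
      ∃ C ⊆ V, IsPreconnected C ∧ z ∈ C ∧ (C ∩ U).Nonempty := by
  have hUK : ∀ᶠ K in atTop, ∀ k ≥ K, trough k ∈ U :=
    eventually_forall_ge_atTop.2 (tendsto_trough.eventually hU)
  obtain ⟨K, hKU, hK⟩ := (hUK.and (eventually_gt_atTop 0)).exists
  refine ⟨1 / (K * (2 * π)), by positivity, fun z hzV hz => ?_⟩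
  rw [V_eq_axisSegment_union_iUnion_arch] at hzV
  obtain hzS | hzA := hzV
  · exact ⟨axisSegment, axisSegment_subset_V, isPreconnected_axisSegment, hzS, r,
      r_mem_axisSegment, mem_of_mem_nhds hU⟩
  obtain ⟨k, hk, hzk⟩ := mem_iUnion₂.1 hzA
  have hKk : K ≤ k := by
    have hlt := lt_of_one_div_lt_one_div (by positivity)
      ((one_div_lt_fst_of_mem_arch hk hzk).trans hz)
    exact_mod_cast (lt_of_mul_lt_mul_right hlt two_pi_pos.le).le
  exact ⟨arch k, arch_subset_V hk, isPreconnected_arch hk, hzk, trough k, trough_mem_arch k,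
    hKU k hKk⟩

lemma exists_pos_forall_apply_eq_of_V_subset {S : Set (ℝ × ℝ)} (hVS : V ⊆ S) {G : Type*} {f : S → G}
    (hf : IsLocallyConstant f) :
    ∃ ε > (0 : ℝ), ∀ z (hz : z ∈ V), z.1 < ε → f ⟨z, hVS hz⟩ = f ⟨r, hVS r_mem_V⟩ := by
  obtain ⟨U, hU, hUf⟩ := (mem_nhds_subtype S _ _).1 (hf.eventually_eq ⟨r, hVS r_mem_V⟩)
  obtain ⟨ε, hε, hC⟩ := exists_pos_forall_exists_isPreconnected_inter_nonempty hU
  refine ⟨ε, hε, fun z hz hzε => ?_⟩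
  obtain ⟨C, hCV, hCconn, hzC, w, hwC, hwU⟩ := hC z hz hzε
  calc f ⟨z, hVS hz⟩ = f ⟨w, hVS (hCV hwC)⟩ :=
        apply_eq_of_isPreconnected_of_subset hf hCconn (hCV.trans hVS) hzC hwC
    _ = f ⟨r, hVS r_mem_V⟩ := hUf hwU

/-- For every `i ≥ 1`, every type `G` and every locally constant `f : Vi i → G`, there is
`ε > 0` with `f z = f r` for every `z ∈ Vi i` whose first coordinate is less than `ε`. -/
theorem stmt_7 : ∀ i : ℕ, 1 ≤ i → ∀ (G : Type*) (f : Vi i → G), IsLocallyConstant f →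
    ∃ ε > (0 : ℝ), ∀ z : Vi i, (z : ℝ × ℝ).1 < ε → f z = f ⟨r, r_mem_Vi i⟩ := by
  intro i hi G f hf
  have hi' : (0 : ℝ) < i := by exact_mod_cast hi
  obtain ⟨ε, hε, hf_eq⟩ := exists_pos_forall_apply_eq_of_V_subset subset_union_left hf
  refine ⟨min ε (1 / i), lt_min hε (one_div_pos.2 hi'), ?_⟩
  rintro ⟨z, hzV | ⟨_, hzi⟩⟩ hz
  · exact hf_eq z hzV (hz.trans_le (min_le_left _ _))
  · exact absurd hzi (hz.trans_le (min_le_right _ _)).not_gt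
end

section
/- Let (G_n)_{n ∈ ℕ} be a sequence of countable abelian groups together with homomorphisms f_n : G_{n+1} → G_n, and for m ≥ n let f_{m,n} : G_m → G_n denote the composite f_n ∘ f_{n+1} ∘ ⋯ ∘ f_{m-1}. Suppose the tower fails the Mittag-Leffler condition, i.e., there exists i such that for every j ≥ i there exists k ≥ j with the range of f_{k,i} strictly contained in the range of f_{j,i}. Then the homomorphism d : ∏_n G_n → ∏_n G_n defined by d(b)_n = b_n − f_n(b_{n+1}) is not surjective. (Equivalently, the first derived limit lim¹ of the tower is nonzero.) -/
/-!
Map the levels `G n`, `i ≤ n`, compatibly to a countable group `A` (for instance `A = G i`), and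
suppose their images fail to stabilise. These drop strictly at infinitely many levels `n`; at each
of them choose `g n` whose image is lost at the next level. Each set `T` of such levels gives a
right-hand side, equal to `g` on `T` and to `0` elsewhere. Were the difference map surjective, two
distinct sets `T` and `T'` would have solutions whose entries at level `i` have the same image in
`A`, as there are uncountably many `T`. Cancelling the common terms up to the first level `n` where
`T` and `T'` differ, one sees that the image of `g n` survives at level `n + 1` after all.
-/

universe u v

/-- The map `b ↦ (b n - f n (b (n + 1)))ₙ` on the product of a tower of groups, whose cokernel is
the first derived limit of the tower when the groups are abelian. It is a function rather than a
bundled homomorphism because the groups, although written additively, may be noncommutative. -/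
def towerDifference {G : ℕ → Type u} [∀ n, AddGroup (G n)] (f : ∀ n, G (n + 1) →+ G n)
    (b : ∀ n, G n) (n : ℕ) : G n :=
  b n - f n (b (n + 1))

theorem not_countable_powerset_of_infinite {α : Type u} {s : Set α} (hs : s.Infinite) :
    ¬ (𝒫 s).Countable := by
  intro hcount
  have : Infinite s := hs.to_subtype
  have : Countable (𝒫 s) := hcount.to_subtype
  have : Countable (Set s) := (Equiv.Set.powerset s).symm.injective.countable
  obtain ⟨code, hcode⟩ := exists_injective_nat (Set s)
  exact Function.cantor_injective _ ((Infinite.natEmbedding s).injective.comp hcode)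

theorem le_of_forall_le_succ_of_le {α : Type u} [Preorder α] {i : ℕ} {H : ∀ n, i ≤ n → α} {j k : ℕ}
    (hij : i ≤ j) (hjk : j ≤ k)
    (hH : ∀ n (hjn : j ≤ n), H n (hij.trans hjn) ≤ H (n + 1) (hij.trans (hjn.trans n.le_succ))) :
    H j hij ≤ H k (hij.trans hjk) := by
  induction k, hjk using Nat.le_induction with
  | base => exact le_rfl
  | succ n hjn ih => exact ih.trans (hH n hjn)

theorem infinite_setOf_not_le_succ {α : Type u} [Preorder α] {i : ℕ} {H : ∀ n, i ≤ n → α}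
    (hH : ∀ j (hij : i ≤ j), ∃ k, ∃ hjk : j ≤ k, ¬ H j hij ≤ H k (hij.trans hjk)) :
    {n | ∃ h : i ≤ n, ¬ H n h ≤ H (n + 1) (h.trans n.le_succ)}.Infinite := by
  rw [← Nat.frequently_atTop_iff_infinite, Filter.frequently_atTop]
  intro m
  obtain ⟨k, hk, hdrop⟩ := hH (max i m) (le_max_left i m)
  by_contra! hmono
  exact hdrop (le_of_forall_le_succ_of_le _ hk fun n hn => hmono n ((le_max_right i m).trans hn) _)

section Cone

variable {G : ℕ → Type u} [∀ n, AddGroup (G n)] {f : ∀ n, G (n + 1) →+ G n}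
  {A : Type v} [AddGroup A] {i : ℕ} {p : ∀ n, i ≤ n → G n →+ A}

theorem exists_infinite_setOf_map_notMem_range_succ
    (hdrop : ∀ j (hij : i ≤ j), ∃ k, ∃ hjk : j ≤ k,
      ¬ (p j hij).range ≤ (p k (hij.trans hjk)).range) :
    ∃ g : ∀ n, G n,
      {n | ∃ h : i ≤ n, p n h (g n) ∉ (p (n + 1) (h.trans n.le_succ)).range}.Infinite := by
  have hlost : ∀ n, ∃ x : G n, ∀ h : i ≤ n,
      ¬ (p n h).range ≤ (p (n + 1) (h.trans n.le_succ)).range →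
        p n h x ∉ (p (n + 1) (h.trans n.le_succ)).range := by
    intro n
    by_cases hn : ∃ h : i ≤ n, ¬ (p n h).range ≤ (p (n + 1) (h.trans n.le_succ)).range
    · obtain ⟨h, hnot⟩ := hn
      obtain ⟨_, ⟨x, rfl⟩, hx⟩ := SetLike.not_le_iff_exists.1 hnot
      exact ⟨x, fun _ _ => hx⟩
    · exact ⟨0, fun h hnot => absurd ⟨h, hnot⟩ hn⟩
  choose g hg using hlost
  refine ⟨g, (infinite_setOf_not_le_succ (H := fun n h => (p n h).range) hdrop).mono ?_⟩
  rintro n ⟨h, hnot⟩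
  exact ⟨h, hg n h hnot⟩

theorem map_towerDifference_add_map_succ
    (hp : ∀ n (h : i ≤ n), p (n + 1) (h.trans n.le_succ) = (p n h).comp (f n))
    (b : ∀ n, G n) {n : ℕ} (h : i ≤ n) :
    p n h (towerDifference f b n) + p (n + 1) (h.trans n.le_succ) (b (n + 1)) = p n h (b n) := by
  rw [hp n h, AddMonoidHom.comp_apply, ← map_add, towerDifference, sub_add_cancel]

theorem map_eq_map_of_towerDifference_eq
    (hp : ∀ n (h : i ≤ n), p (n + 1) (h.trans n.le_succ) = (p n h).comp (f n))
    {b b' : ∀ n, G n} (hi : p i le_rfl (b i) = p i le_rfl (b' i)) {n : ℕ} (h : i ≤ n)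
    (hbb' : ∀ k < n, towerDifference f b k = towerDifference f b' k) :
    p n h (b n) = p n h (b' n) := by
  induction n, h using Nat.le_induction with
  | base => exact hi
  | succ n h ih =>
    have hn : p n h (b n) = p n h (b' n) := ih fun k hk => hbb' k (hk.trans n.lt_succ_self)
    rw [← map_towerDifference_add_map_succ hp b h, ← map_towerDifference_add_map_succ hp b' h,
      hbb' n n.lt_succ_self] at hn
    exact add_left_cancel hn

theorem neg_map_add_map_towerDifference_mem_range_succ
    (hp : ∀ n (h : i ≤ n), p (n + 1) (h.trans n.le_succ) = (p n h).comp (f n))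
    {b b' : ∀ n, G n} {n : ℕ} (h : i ≤ n) (hn : p n h (b n) = p n h (b' n)) :
    -p n h (towerDifference f b' n) + p n h (towerDifference f b n) ∈
      (p (n + 1) (h.trans n.le_succ)).range := by
  refine ⟨b' (n + 1) - b (n + 1), ?_⟩
  rw [← map_towerDifference_add_map_succ hp b h, ← map_towerDifference_add_map_succ hp b' h] at hn
  rw [map_sub, sub_eq_iff_eq_add, add_assoc, hn, neg_add_cancel_left]

open Classical in
theorem injOn_powerset_map_of_towerDifference_eq_piecewise
    (hp : ∀ n (h : i ≤ n), p (n + 1) (h.trans n.le_succ) = (p n h).comp (f n))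
    {S : Set ℕ} {g : ∀ n, G n}
    (hg : ∀ n ∈ S, ∃ h : i ≤ n, p n h (g n) ∉ (p (n + 1) (h.trans n.le_succ)).range)
    {B : Set ℕ → ∀ n, G n} (hB : ∀ T, towerDifference f (B T) = T.piecewise g 0) :
    Set.InjOn (fun T => p i le_rfl (B T i)) (𝒫 S) := by
  have mem_of_mem {T T' : Set ℕ} (hT : T ⊆ S) (hi : p i le_rfl (B T i) = p i le_rfl (B T' i))
      {n : ℕ} (hlt : ∀ k < n, k ∈ T ↔ k ∈ T') (hnT : n ∈ T) : n ∈ T' := by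
    by_contra hnT'
    obtain ⟨h, hgn⟩ := hg n (hT hnT)
    have hagree : ∀ k < n, towerDifference f (B T) k = towerDifference f (B T') k := by
      intro k hk
      simp only [hB, Set.piecewise, hlt k hk]
    have hmem := neg_map_add_map_towerDifference_mem_range_succ hp h
      (map_eq_map_of_towerDifference_eq hp hi h hagree)
    rw [hB, hB, Set.piecewise_eq_of_mem _ _ _ hnT, Set.piecewise_eq_of_notMem _ _ _ hnT',
      Pi.zero_apply, map_zero, neg_zero, zero_add] at hmem
    exact hgn hmem
  intro T hT T' hT' hi
  ext n
  induction n using Nat.strong_induction_on with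
  | h n ih => exact ⟨mem_of_mem hT hi ih, mem_of_mem hT' hi.symm fun k hk => (ih k hk).symm⟩

end Cone

theorem stmt_12_general {G : ℕ → Type u} [∀ n, AddGroup (G n)] {f : ∀ n, G (n + 1) →+ G n}
    {A : Type v} [AddGroup A] [Countable A] {i : ℕ} {p : ∀ n, i ≤ n → G n →+ A}
    (hp : ∀ n (h : i ≤ n), p (n + 1) (h.trans n.le_succ) = (p n h).comp (f n))
    (hdrop : ∀ j (hij : i ≤ j), ∃ k, ∃ hjk : j ≤ k,
      ¬ (p j hij).range ≤ (p k (hij.trans hjk)).range) :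
    ¬ Function.Surjective (towerDifference f) := by
  classical
  intro hsurj
  obtain ⟨g, hg⟩ := exists_infinite_setOf_map_notMem_range_succ hdrop
  choose B hB using fun T : Set ℕ => hsurj (T.piecewise g 0)
  have hinj := injOn_powerset_map_of_towerDifference_eq_piecewise hp (fun _ hn => hn) hB
  exact not_countable_powerset_of_infinite hg (Set.countable_of_injective_of_countable_image hinj
    (Set.to_countable _))

/-- Let `(G n)` be a tower of countable abelian groups with bonding maps
`f n : G (n+1) →+ G n`, and let `F h : G m →+ G n` (for `h : n ≤ m`) be the composite
`f n ∘ f (n+1) ∘ ⋯ ∘ f (m-1)` (characterized by `hFrefl` and `hFstep`). If the tower fails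
the Mittag-Leffler condition, then the map `d : ∏ G n → ∏ G n`,
`d b n = b n - f n (b (n+1))`, is not surjective (i.e. `lim¹` is nonzero). -/
theorem stmt_12 (G : ℕ → Type) [∀ n, AddCommGroup (G n)] [∀ n, Countable (G n)]
    (f : ∀ n : ℕ, G (n + 1) →+ G n)
    (F : ∀ {m n : ℕ}, n ≤ m → (G m →+ G n))
    (hFrefl : ∀ n : ℕ, F (le_refl n) = AddMonoidHom.id (G n))
    (hFstep : ∀ {m n : ℕ} (h : n ≤ m),
      F (h.trans (Nat.le_succ m)) = (F h).comp (f m))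
    (hML : ∃ i : ℕ, ∀ j : ℕ, ∀ hij : i ≤ j, ∃ k : ℕ, ∃ hjk : j ≤ k,
      Set.range (⇑(F (hij.trans hjk))) ⊂ Set.range (⇑(F hij))) :
    ¬ Function.Surjective
      (fun (b : ∀ n : ℕ, G n) (n : ℕ) => b n - f n (b (n + 1))) := by
  obtain ⟨i, hi⟩ := hML
  refine stmt_12_general (i := i) (p := fun _ => F) (fun _ => hFstep) fun j hij => ?_
  obtain ⟨k, hjk, hss⟩ := hi j hij
  exact ⟨k, hjk, hss.not_subset⟩
end
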